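/- Let d ≥ 1, ω = exp(2πi/d), Z|j⟩ = |j⊕1⟩, W|j⟩ = ω^j|j⟩, and U_{pq} = Z^p W^q for p, q ∈ ℤ_d. Let ψ ∈ ℂ^d be a unit vector such that Tr(U_{pq}^† ψψ^†) ≠ 0 for all p, q ∈ ℤ_d. Then the family P_{(p,q)} = (1/d) U_{pq} (ψψ^†) U_{pq}^†, indexed by ℤ_d × ℤ_d, is a POVM on ℂ^d with d² rank-one elements, its elements are linearly independent over ℂ and span M_d(ℂ) (so it is informationally complete), and it is an extremal POVM. -/

import Mathlib

/-!
Up to the factor `1/d`, the elements of the family are `v v†` with `v = U_{pq} ψ`, with entries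
`χ(q(i - k)) ψ(i - p) conj(ψ(k - p))`, where `χ` is the standard character of `ℤ_d`
(`orbit_apply`). Character orthogonality shows that they sum to `d • 1` (`sum_orbit`).

Linear independence (`orbit_coeff_zero`) is a deconvolution argument. Restricted to the diagonal
`i - k = m`, a relation `∑ c_{pq} v v† = 0` says that a convolution over `ℤ_d` vanishes: one factor
is `p ↦ ∑_q c_{pq} χ(qm)`, the other is `x ↦ ψ(x + m) conj(ψ(x))`. The Fourier coefficients of the
second factor are the traces assumed to be nonzero (`trace_eq`), so the first factor is zero for
every `m`, and Fourier inversion in `q` gives `c = 0`. Counting dimensions, the family spans.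

For extremality, if `P = aQ + bR` is a convex decomposition with `a, b > 0`, each `Q_e` is positive
and vanishes on the orthogonal complement of the vector `v` of `P_e`, hence is a multiple
`t_e • P_e` (`psd_eq_smul`). Then `∑ t_e P_e = 1 = ∑ P_e`, and linear independence forces `t_e = 1`.
-/

open Matrix
open scoped ComplexOrder

/-- A POVM with finite outcome set `E` on the Hilbert space `ℂ^n` (here the
Hilbert-space dimension is indexed by an arbitrary finite type `n`). -/
def IsPOVM {n : Type*} [Fintype n] [DecidableEq n] {E : Type*} [Fintype E]
    (P : E → Matrix n n ℂ) : Prop :=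
  (∀ e, (P e).PosSemidef) ∧ ∑ e, P e = 1

/-- A POVM is extremal if it is an extreme point of the convex set of POVMs. -/
def IsExtremalPOVM {n : Type*} [Fintype n] [DecidableEq n] {E : Type*} [Fintype E]
    (P : E → Matrix n n ℂ) : Prop :=
  P ∈ Set.extremePoints ℝ {Q : E → Matrix n n ℂ | IsPOVM Q}

/-- The cyclic shift matrix `Z` on `ℂ^d`: `Z|j⟩ = |j ⊕ 1⟩` (addition mod `d`). -/
noncomputable def shiftMat (d : ℕ) [NeZero d] : Matrix (ZMod d) (ZMod d) ℂ :=
  Matrix.of fun i j : ZMod d => if i = j + 1 then (1 : ℂ) else 0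

/-- The phase multiplication matrix `W` on `ℂ^d`: `W|j⟩ = ω^j |j⟩` with `ω = exp(2πi/d)`. -/
noncomputable def multMat (d : ℕ) [NeZero d] : Matrix (ZMod d) (ZMod d) ℂ :=
  Matrix.diagonal fun j : ZMod d => Complex.exp (2 * Real.pi * Complex.I / d) ^ j.val

/-- The shift-and-multiply unitaries `U_{pq} = Z^p W^q`. -/
noncomputable def shiftMult (d : ℕ) [NeZero d] (p q : ZMod d) : Matrix (ZMod d) (ZMod d) ℂ :=
  shiftMat d ^ p.val * multMat d ^ q.val

open ZMod

lemma multMat_eq (d : ℕ) [NeZero d] :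
    multMat d = Matrix.diagonal fun j : ZMod d => stdAddChar j := by
  unfold multMat
  congr 1
  ext j
  rw [stdAddChar_apply, toCircle_apply, ← Complex.exp_nat_mul]
  congr 1
  ring

lemma shiftMat_pow_apply (d : ℕ) [NeZero d] (n : ℕ) (i j : ZMod d) :
    (shiftMat d ^ n) i j = if i = j + n then 1 else 0 := by
  induction n generalizing i j with
  | zero => simp [Matrix.one_apply]
  | succ n ih =>
    rw [pow_succ, Matrix.mul_apply]
    have h (k : ZMod d) : shiftMat d k j = if k = j + 1 then 1 else 0 := rfl
    simp only [ih, h, mul_ite, mul_one, mul_zero, Finset.sum_ite_eq', Finset.mem_univ, if_true]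
    push_cast
    simp only [add_assoc, add_comm (1 : ZMod d)]

lemma shiftMult_apply (d : ℕ) [NeZero d] (p q i j : ZMod d) :
    shiftMult d p q i j = if i = j + p then stdAddChar (q * j) else 0 := by
  have h : stdAddChar (q * j) = (stdAddChar j : ℂ) ^ q.val := by
    rw [← AddChar.map_nsmul_eq_pow, nsmul_eq_mul, ZMod.natCast_zmod_val]
  rw [shiftMult, multMat_eq, Matrix.diagonal_pow, Matrix.mul_diagonal, shiftMat_pow_apply, h]
  simp

lemma shiftMult_mulVec (d : ℕ) [NeZero d] (p q : ZMod d) (ψ : ZMod d → ℂ) (i : ZMod d) :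
    (shiftMult d p q *ᵥ ψ) i = stdAddChar (q * (i - p)) * ψ (i - p) := by
  simp only [Matrix.mulVec, dotProduct, shiftMult_apply, ← sub_eq_iff_eq_add, ite_mul, zero_mul]
  simp

lemma mul_vecMulVec_star_mul {n : Type*} [Fintype n] (U : Matrix n n ℂ) (ψ : n → ℂ) :
    U * vecMulVec ψ (star ψ) * Uᴴ = vecMulVec (U *ᵥ ψ) (star (U *ᵥ ψ)) := by
  rw [Matrix.mul_vecMulVec, Matrix.vecMulVec_mul, Matrix.star_mulVec]

/-- Entries of `U ψψ† U†` for `U = U_{pq}`: the label `q` enters only through a character of the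
difference `i - k`, and `p` only through a translation. This is what makes the orbit accessible to
the discrete Fourier transform. -/
lemma orbit_apply (d : ℕ) [NeZero d] (p q : ZMod d) (ψ : ZMod d → ℂ) (i k : ZMod d) :
    vecMulVec (shiftMult d p q *ᵥ ψ) (star (shiftMult d p q *ᵥ ψ)) i k =
      stdAddChar (q * (i - k)) * (ψ (i - p) * star (ψ (k - p))) := by
  rw [vecMulVec_apply, Pi.star_apply, shiftMult_mulVec, shiftMult_mulVec, star_mul']
  have h : star (stdAddChar (q * (k - p)) : ℂ) = stdAddChar (-(q * (k - p))) := by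
    rw [AddChar.map_neg_eq_conj]; rfl
  rw [h, show q * (i - k) = q * (i - p) + -(q * (k - p)) by ring, AddChar.map_add_eq_mul]
  ring

/-- The hypothesis traces are the Fourier coefficients of the autocorrelations
`j ↦ ψ (j + p) * star (ψ j)`. -/
lemma trace_eq (d : ℕ) [NeZero d] (p q : ZMod d) (ψ : ZMod d → ℂ) :
    ((shiftMult d p q)ᴴ * vecMulVec ψ (star ψ)).trace =
      ∑ j, stdAddChar (-(q * j)) * (ψ (j + p) * star (ψ j)) := by
  simp only [Matrix.trace, Matrix.diag, Matrix.mul_apply, Matrix.conjTranspose_apply,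
    shiftMult_apply, vecMulVec_apply, AddChar.map_neg_eq_conj, apply_ite star, star_zero, ite_mul,
    zero_mul, Finset.sum_ite_eq', Finset.mem_univ, if_true]
  rfl

/-- The orbit `U ψψ† U†` is linearly independent: on each diagonal `i - k = m`, a vanishing
combination says that the convolution of the Fourier transform of the coefficients in `q`, as a
function of `p`, with an autocorrelation of `ψ` is zero. The Fourier coefficients of the latter
never vanish, so the transformed coefficients do. -/
lemma orbit_coeff_zero (d : ℕ) [NeZero d] (ψ : ZMod d → ℂ)
    (hcond : ∀ p q : ZMod d,
      ((shiftMult d p q)ᴴ * vecMulVec ψ (star ψ)).trace ≠ 0)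
    (c : ZMod d × ZMod d → ℂ)
    (hc : ∑ e, c e • vecMulVec (shiftMult d e.1 e.2 *ᵥ ψ) (star (shiftMult d e.1 e.2 *ᵥ ψ)) = 0)
    (e : ZMod d × ZMod d) : c e = 0 := by
  -- entry `(x + m, x)` of the relation
  have hconv (m x : ZMod d) :
      ∑ p, 𝓕 (fun q => c (p, q)) (-m) * (ψ (x + m - p) * star (ψ (x - p))) = 0 := by
    have h := congrFun (congrFun hc (x + m)) x
    rw [Matrix.sum_apply, Fintype.sum_prod_type] at h
    simp only [Matrix.smul_apply, orbit_apply, smul_eq_mul, Matrix.zero_apply] at h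
    rw [← h]
    refine Finset.sum_congr rfl fun p _ => ?_
    rw [dft_apply, Finset.sum_mul]
    refine Finset.sum_congr rfl fun q _ => ?_
    rw [add_sub_cancel_left, mul_neg, neg_neg, smul_eq_mul]
    ring
  -- Fourier transform in `x` of the convolution in `hconv`
  have hprod (m n : ZMod d) :
      𝓕 (fun p => 𝓕 (fun q => c (p, q)) (-m)) n *
        ∑ j, stdAddChar (-(n * j)) * (ψ (j + m) * star (ψ j)) = 0 := by
    have h : ∑ x, (stdAddChar (-(n * x)) : ℂ) *
        ∑ p, 𝓕 (fun q => c (p, q)) (-m) * (ψ (x + m - p) * star (ψ (x - p))) = 0 := by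
      simp only [hconv, mul_zero, Finset.sum_const_zero]
    rw [← h]
    conv_rhs => simp only [Finset.mul_sum]
    rw [Finset.sum_comm, dft_apply, Finset.sum_mul]
    refine Finset.sum_congr rfl fun p _ => ?_
    rw [Finset.mul_sum]
    refine Fintype.sum_equiv (Equiv.addRight p) _ _ fun j => ?_
    rw [Equiv.coe_addRight, show -(n * (j + p)) = -(p * n) + -(n * j) by ring,
      AddChar.map_add_eq_mul, show j + p + m - p = j + m by ring, add_sub_cancel_right,
      smul_eq_mul]
    ring
  have h1 (m : ZMod d) : (fun p => 𝓕 (fun q => c (p, q)) (-m)) = 0 := by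
    refine (LinearEquiv.map_eq_zero_iff (dft (N := d) (E := ℂ))).1 (funext fun n => ?_)
    refine (mul_eq_zero.1 (hprod m n)).resolve_right ?_
    rw [← trace_eq]
    exact hcond m n
  have h2 : (fun q => c (e.1, q)) = 0 := by
    refine (LinearEquiv.map_eq_zero_iff (dft (N := d) (E := ℂ))).1 (funext fun m => ?_)
    simpa using congrFun (h1 (-m)) e.1
  exact congrFun h2 e.2

/-- Summing over `q` kills the off-diagonal entries by character orthogonality; summing over `p`
turns each diagonal entry into the squared norm of `ψ`. -/
lemma sum_orbit (d : ℕ) [NeZero d] (ψ : ZMod d → ℂ) (hψ : star ψ ⬝ᵥ ψ = 1) :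
    ∑ e : ZMod d × ZMod d,
      vecMulVec (shiftMult d e.1 e.2 *ᵥ ψ) (star (shiftMult d e.1 e.2 *ᵥ ψ)) =
        (d : ℂ) • (1 : Matrix (ZMod d) (ZMod d) ℂ) := by
  ext i k
  rw [Matrix.sum_apply, Fintype.sum_prod_type]
  simp only [orbit_apply, ← Finset.sum_mul,
    AddChar.sum_mulShift _ (isPrimitive_stdAddChar d), sub_eq_zero, ZMod.card]
  rw [← Finset.mul_sum]
  by_cases h : i = k
  · subst h
    rw [← (Equiv.subLeft i).sum_comp]
    have : ∑ x, ψ x * star (ψ x) = 1 := by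
      rw [← hψ, dotProduct_comm]; rfl
    simpa [this] using congrArg ((d : ℂ) * ·) this
  · simp [h]

/-- A positive semidefinite matrix whose kernel contains the orthogonal complement of `v` is a
multiple of `v v†`. -/
lemma psd_eq_smul {n : Type*} [Fintype n] [DecidableEq n] {Q : Matrix n n ℂ} {v : n → ℂ}
    (hQ : Q.PosSemidef) (hv : v ≠ 0) (h : ∀ w, star v ⬝ᵥ w = 0 → Q *ᵥ w = 0) :
    ∃ c : ℂ, Q = c • vecMulVec v (star v) := by
  have hN : star v ⬝ᵥ v ≠ 0 := by simpa using hv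
  have hN' : star (star v ⬝ᵥ v) = star v ⬝ᵥ v := by rw [← Matrix.star_dotProduct_star, star_star]
  have hQx (x : n → ℂ) : Q *ᵥ x = ((star v ⬝ᵥ x) / (star v ⬝ᵥ v)) • Q *ᵥ v := by
    rw [← sub_eq_zero, ← Matrix.mulVec_smul, ← Matrix.mulVec_sub]
    apply h
    rw [dotProduct_sub, dotProduct_smul, smul_eq_mul, div_mul_cancel₀ _ hN, sub_self]
  have hQ1 : Q = (star v ⬝ᵥ v)⁻¹ • vecMulVec (Q *ᵥ v) (star v) := by
    refine Matrix.ext_of_mulVec_single fun i => ?_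
    rw [hQx, Matrix.smul_mulVec, Matrix.vecMulVec_mulVec]
    ext
    simp [div_eq_inv_mul]
    ring
  have hQ2 : Q = (star v ⬝ᵥ v)⁻¹ • vecMulVec v (star (Q *ᵥ v)) := by
    have h2 := congrArg conjTranspose hQ1
    rwa [hQ.isHermitian.eq, Matrix.conjTranspose_smul, star_inv₀, hN', conjTranspose_vecMulVec,
      star_star] at h2
  have hQv : Q *ᵥ v = ((star v ⬝ᵥ v)⁻¹ * (star (Q *ᵥ v) ⬝ᵥ v)) • v := by
    conv_lhs => rw [hQ2, Matrix.smul_mulVec, Matrix.vecMulVec_mulVec]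
    ext
    simp
    ring
  refine ⟨(star v ⬝ᵥ v)⁻¹ * ((star v ⬝ᵥ v)⁻¹ * (star (Q *ᵥ v) ⬝ᵥ v)), ?_⟩
  conv_lhs => rw [hQ1, hQv, Matrix.smul_vecMulVec, smul_smul]

theorem stmt16 (d : ℕ) [NeZero d] (ψ : ZMod d → ℂ) (hψ : star ψ ⬝ᵥ ψ = 1)
    (hcond : ∀ p q : ZMod d,
      ((shiftMult d p q)ᴴ * vecMulVec ψ (star ψ)).trace ≠ 0)
    (P : ZMod d × ZMod d → Matrix (ZMod d) (ZMod d) ℂ)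
    (hPdef : ∀ pq : ZMod d × ZMod d, P pq = (d : ℂ)⁻¹ •
      (shiftMult d pq.1 pq.2 * vecMulVec ψ (star ψ) * (shiftMult d pq.1 pq.2)ᴴ)) :
    IsPOVM P ∧ (∀ pq, (P pq).rank = 1) ∧ LinearIndependent ℂ P ∧
      Submodule.span ℂ (Set.range P) = ⊤ ∧ IsExtremalPOVM P := by
  set v : ZMod d × ZMod d → ZMod d → ℂ := fun e => shiftMult d e.1 e.2 *ᵥ ψ with hvdef
  have hP (e) : P e = (d : ℂ)⁻¹ • vecMulVec (v e) (star (v e)) := by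
    rw [hPdef, mul_vecMulVec_star_mul]
  have hd : (d : ℂ) ≠ 0 := NeZero.ne _
  have hpsd (e) : (P e).PosSemidef := by
    rw [hP]
    exact (posSemidef_vecMulVec_self_star _).smul (by positivity)
  have hsum : ∑ e, P e = 1 := by
    simp only [hP]
    rw [← Finset.smul_sum, sum_orbit d ψ hψ, smul_smul, inv_mul_cancel₀ hd, one_smul]
  have hli : LinearIndependent ℂ P := by
    refine Fintype.linearIndependent_iff.2 fun c hc e => ?_
    refine orbit_coeff_zero d ψ hcond c ?_ e
    have : (d : ℂ)⁻¹ • ∑ e, c e • vecMulVec (v e) (star (v e)) = 0 := by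
      rw [← hc, Finset.smul_sum]
      refine Finset.sum_congr rfl fun e _ => ?_
      rw [hP, smul_comm]
    exact (smul_eq_zero.1 this).resolve_left (inv_ne_zero hd)
  have hv (e) : v e ≠ 0 := fun h => hli.ne_zero e (by rw [hP, h, zero_vecMulVec, smul_zero])
  refine ⟨⟨hpsd, hsum⟩, fun e => ?_, hli, ?_, ?_⟩
  · refine le_antisymm ?_ (Nat.one_le_iff_ne_zero.2 fun h => hli.ne_zero e ?_)
    · rw [hP, ← smul_vecMulVec]
      exact rank_vecMulVec_le _ _
    · rw [Matrix.rank, Submodule.finrank_eq_zero, LinearMap.range_eq_bot] at h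
      exact Matrix.ext_of_mulVec_single fun i => by
        rw [← Matrix.mulVecLin_apply, h, LinearMap.zero_apply, Matrix.zero_mulVec]
  · refine hli.span_eq_top_of_card_eq_finrank' ?_
    simp [Module.finrank_matrix]
  · refine mem_extremePoints_iff_left.2 ⟨⟨hpsd, hsum⟩, ?_⟩
    rintro Q ⟨hQ, hQsum⟩ R ⟨hR, -⟩ ⟨a, b, ha, hb, -, hab⟩
    -- `a Q_e ≤ P_e`, so `Q_e` vanishes on the orthogonal complement of the vector spanning the
    -- range of `P_e`.
    have hker (e) (w : ZMod d → ℂ) (hw : star (v e) ⬝ᵥ w = 0) : Q e *ᵥ w = 0 := by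
      have h0 : P e *ᵥ w = 0 := by
        rw [hP, Matrix.smul_mulVec, vecMulVec_mulVec, hw]
        simp
      rw [← hab, Pi.add_apply, Pi.smul_apply, Pi.smul_apply, Matrix.add_mulVec,
        Matrix.smul_mulVec, Matrix.smul_mulVec] at h0
      have h1 := congrArg (star w ⬝ᵥ ·) h0
      simp only [dotProduct_add, dotProduct_smul, dotProduct_zero] at h1
      have hq := (hQ e).dotProduct_mulVec_nonneg w
      have hr := (hR e).dotProduct_mulVec_nonneg w
      have h2 := ((add_eq_zero_iff_of_nonneg (smul_nonneg ha.le hq) (smul_nonneg hb.le hr)).1 h1).1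
      exact ((hQ e).dotProduct_mulVec_zero_iff w).1 ((smul_eq_zero.1 h2).resolve_left ha.ne')
    choose c hc using fun e => psd_eq_smul (hQ e) (hv e) (hker e)
    have hQc (e) : Q e = (c e * d) • P e := by
      rw [hc, hP, smul_smul, mul_assoc, mul_inv_cancel₀ hd, mul_one]
    have hzero : ∑ e, (c e * d - 1) • P e = 0 := by
      simp only [sub_smul, one_smul, Finset.sum_sub_distrib, ← hQc]
      rw [hQsum, hsum, sub_self]
    funext e
    rw [hQc, sub_eq_zero.1 (Fintype.linearIndependent_iff.1 hli _ hzero e), one_smul]
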